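/- Let V be a real vector space with a symmetric positive bilinear form 𝔅, let r ∈ ℕ₊, and define the 2r-linear form Λ(u₁,…,u_{2r}) := 𝔅(u₁,u₂)⋯𝔅(u_{2r−1},u_{2r}). Let 𝒫 be a partition of {1,…,2r} all of whose blocks have exactly two elements, and let v₁,…,v_L ∈ V. Then ∑_{(l_P)_{P∈𝒫}} Λ(v_{l_{𝒫(1)}},…,v_{l_{𝒫(2r)}}) ≥ 0, where the sum is over independent indices 1 ≤ l_P ≤ L for each block P and 𝒫(j) denotes the block containing j. -/

import Mathlib

open Finset

/-!
Contract the blocks of the partition to vertices: the pairs `(1,2), (3,4), …` become the edges of a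
2-regular multigraph. Diagonalise the Gram matrix of the vectors as
`G a b = ∑ k, d k * U a k * U b k` with `d ≥ 0` and `U` orthogonal, and put one eigenvalue index `k`
on every edge. For a fixed choice of these indices the sum over the vertex labels factorizes over
the vertices, and the factor of a vertex whose two edge ends carry `k` and `k'` is
`∑ a, U a k * U a k' = δ k k' ≥ 0`. This replaces the decomposition of the multigraph into cycles.
-/

section Sums

variable {α β ι R : Type*} [Fintype α] [Fintype β] [Fintype ι] [DecidableEq β]

lemma sum_prod_comp_eq_prod_sum_prod_fiber [CommSemiring R] (q : α → β) (f : α → ι → R) :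
    ∑ m : β → ι, ∏ x, f x (m (q x)) = ∏ y, ∑ a, ∏ x with q x = y, f x a := by
  rw [prod_univ_sum, Fintype.piFinset_univ]
  refine sum_congr rfl fun m _ => ?_
  rw [← prod_fiberwise univ q]
  refine prod_congr rfl fun y _ => prod_congr rfl fun x hx => ?_
  rw [(mem_filter.1 hx).2]

lemma sum_filter_eq_sum_comp_rangeFactorization {δ : Type*} [DecidableEq α] [DecidableEq δ]
    [AddCommMonoid R] (q : α → δ) (F : (α → ι) → R)
    [DecidablePred fun l : α → ι => ∀ i j, q i = q j → l i = l j] :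
    ∑ l : α → ι with ∀ i j, q i = q j → l i = l j, F l =
      ∑ m : Set.range q → ι, F (m ∘ Set.rangeFactorization q) := by
  have hq : (Set.rangeFactorization q).Surjective := Set.rangeFactorization_surjective
  refine (sum_nbij (· ∘ Set.rangeFactorization q) ?_ hq.injective_comp_right.injOn ?_
    fun _ _ => rfl).symm
  · exact fun m _ => mem_filter.2 ⟨mem_univ _, fun i j h => congrArg m (Subtype.ext h)⟩
  · intro l hl
    refine ⟨l ∘ Function.surjInv hq, mem_coe.2 (mem_univ _), funext fun x => ?_⟩
    exact (mem_filter.1 hl).2 _ _ (congrArg Subtype.val (Function.surjInv_eq hq _))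

end Sums

section Matrix

variable {ι : Type*}

lemma posSemidef_bilinGram {V : Type*} [AddCommGroup V] [Module ℝ V] {B : V →ₗ[ℝ] V →ₗ[ℝ] ℝ}
    (hsym : ∀ u v, B u v = B v u) (hpos : ∀ v, 0 ≤ B v v) (v : ι → V) :
    (Matrix.of fun a b => B (v a) (v b)).PosSemidef := by
  refine ⟨Matrix.IsHermitian.ext fun a b => hsym _ _, fun x => ?_⟩
  have h := hpos (Finsupp.linearCombination ℝ v x)
  simp only [Finsupp.linearCombination_apply, Finsupp.sum, map_sum, map_smul, LinearMap.sum_apply,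
    LinearMap.smul_apply, smul_eq_mul, mul_sum] at h
  rw [sum_comm] at h
  simpa only [Finsupp.sum, Matrix.of_apply, star_trivial, mul_comm, mul_left_comm] using h

variable [Fintype ι] {G : Matrix ι ι ℝ}

lemma isHermitian_apply_eq_sum_eigenvalues_mul [DecidableEq ι] (hG : G.IsHermitian) (a b : ι) :
    G a b = ∑ k, hG.eigenvalues k *
      (hG.eigenvectorUnitary.1 a k * hG.eigenvectorUnitary.1 b k) := by
  conv_lhs => rw [hG.spectral_theorem, Unitary.conjStarAlgAut_apply, Matrix.mul_apply]
  refine sum_congr rfl fun k _ => ?_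
  rw [Matrix.mul_diagonal]
  simp only [Function.comp_apply, Matrix.star_apply, star_trivial, RCLike.ofReal_real_eq_id, id]
  ring

lemma sum_mul_nonneg_of_mem_unitaryGroup [DecidableEq ι] {U : Matrix ι ι ℝ}
    (hU : U ∈ Matrix.unitaryGroup ι ℝ) (k k' : ι) : 0 ≤ ∑ a, U a k * U a k' := by
  have h : ∑ a, U a k * U a k' = (1 : Matrix ι ι ℝ) k k' := by
    rw [← Matrix.mem_unitaryGroup_iff'.1 hU]
    simp [Matrix.mul_apply]
  rw [h, Matrix.one_apply]
  positivity

/-- Here `β` is the vertex set and `κ` the edge set of a multigraph, in which the edge `i` joins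
`q (i, 0)` and `q (i, 1)`. -/
lemma sum_prod_edge_nonneg_of_twoRegular {κ β : Type*} [Fintype κ] [Fintype β] [DecidableEq β]
    (hG : G.PosSemidef) (q : κ × Fin 2 → β) (hq : ∀ y, #{x | q x = y} = 2) :
    0 ≤ ∑ m : β → ι, ∏ i, G (m (q (i, 0))) (m (q (i, 1))) := by
  classical
  set U := hG.isHermitian.eigenvectorUnitary.1
  set d := hG.isHermitian.eigenvalues
  have expand (m : β → ι) : ∏ i, G (m (q (i, 0))) (m (q (i, 1))) =
      ∑ c : κ → ι, (∏ i, d (c i)) * ∏ x, U (m (q x)) (c x.1) :=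
    calc ∏ i, G (m (q (i, 0))) (m (q (i, 1)))
      _ = ∏ i, ∑ k, d k * (U (m (q (i, 0))) k * U (m (q (i, 1))) k) :=
        prod_congr rfl fun _ _ => isHermitian_apply_eq_sum_eigenvalues_mul hG.isHermitian _ _
      _ = ∑ c : κ → ι, ∏ i, d (c i) * (U (m (q (i, 0))) (c i) * U (m (q (i, 1))) (c i)) := by
        rw [prod_univ_sum, Fintype.piFinset_univ]
      _ = _ := by
        simp_rw [Fintype.prod_prod_type, Fin.prod_univ_two, prod_mul_distrib]
  simp_rw [expand]
  rw [sum_comm]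
  refine sum_nonneg fun c _ => ?_
  rw [← mul_sum, sum_prod_comp_eq_prod_sum_prod_fiber q fun x a => U a (c x.1)]
  refine mul_nonneg (prod_nonneg fun i _ => hG.eigenvalues_nonneg _) (prod_nonneg fun y _ => ?_)
  obtain ⟨x, x', hne, hxx'⟩ := card_eq_two.1 (hq y)
  simp_rw [hxx', prod_pair hne]
  exact sum_mul_nonneg_of_mem_unitaryGroup hG.isHermitian.eigenvectorUnitary.2 _ _

end Matrix

theorem stmt8_general {V α κ ι : Type*} [AddCommGroup V] [Module ℝ V]
    [Fintype α] [DecidableEq α] [Fintype κ] [Fintype ι] (B : V →ₗ[ℝ] V →ₗ[ℝ] ℝ)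
    (hsym : ∀ u v : V, B u v = B v u) (hpos : ∀ v : V, 0 ≤ B v v)
    (e : κ × Fin 2 ≃ α) (P : Finpartition (univ : Finset α)) (hP : ∀ t ∈ P.parts, #t = 2)
    (v : ι → V) [DecidablePred fun l : α → ι => ∀ i j, P.part i = P.part j → l i = l j] :
    0 ≤ ∑ l : α → ι with ∀ i j, P.part i = P.part j → l i = l j,
      ∏ i, B (v (l (e (i, 0)))) (v (l (e (i, 1)))) := by
  rw [sum_filter_eq_sum_comp_rangeFactorization]
  refine sum_prod_edge_nonneg_of_twoRegular (posSemidef_bilinGram hsym hpos v)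
    (Set.rangeFactorization P.part ∘ e) ?_
  rw [Set.rangeFactorization_surjective.forall]
  intro x
  have hx : P.part x ∈ P.parts := P.part_mem.2 (mem_univ x)
  refine (card_equiv e fun z => ?_).trans (hP _ hx)
  simp [P.part_eq_iff_mem hx]

/-- The numbering `(i, 0) ↦ 2 * i`, `(i, 1) ↦ 2 * i + 1` of the elements of the pairs
`(1,2), (3,4), …`, counted from zero. -/
def pairEquiv (r : ℕ) : Fin r × Fin 2 ≃ Fin (2 * r) :=
  finProdFinEquiv.trans (finCongr (mul_comm r 2))

lemma pairEquiv_zero {r : ℕ} (i : Fin r) : pairEquiv r (i, 0) = ⟨2 * i.1, by lia⟩ := by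
  ext; simp [pairEquiv]

lemma pairEquiv_one {r : ℕ} (i : Fin r) : pairEquiv r (i, 1) = ⟨2 * i.1 + 1, by lia⟩ := by
  ext; simp [pairEquiv, add_comm]

/-- For a symmetric positive bilinear form `𝔅` on a real vector space, with the
`2r`-linear form `Λ(u₁,…,u_{2r}) = 𝔅(u₁,u₂)⋯𝔅(u_{2r−1},u_{2r})`, for any
partition `𝒫` of `{1,…,2r}` all of whose blocks have exactly two elements and
any `v₁,…,v_L ∈ V`, `∑_{(l_P)_{P∈𝒫}} Λ(v_{l_{𝒫(1)}},…,v_{l_{𝒫(2r)}}) ≥ 0`.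
The sum over independent block indices is encoded as the sum over all index
tuples `l : Fin (2r) → Fin L` which are constant on the blocks of `𝒫`. -/
theorem stmt8 (V : Type*) [AddCommGroup V] [Module ℝ V]
    (B : V →ₗ[ℝ] V →ₗ[ℝ] ℝ)
    (hsym : ∀ u v : V, B u v = B v u) (hpos : ∀ v : V, 0 ≤ B v v)
    (r : ℕ) (hr : 0 < r)
    (P : Finpartition (univ : Finset (Fin (2 * r))))
    (hP : ∀ t ∈ P.parts, t.card = 2)
    (L : ℕ) (v : Fin L → V) :
    0 ≤ ∑ l ∈ (univ : Finset (Fin (2 * r) → Fin L)).filter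
          (fun l => ∀ i j : Fin (2 * r), P.part i = P.part j → l i = l j),
        ∏ i : Fin r,
          B (v (l ⟨2 * i.1, by have := i.isLt; omega⟩))
            (v (l ⟨2 * i.1 + 1, by have := i.isLt; omega⟩)) := by
  simpa only [pairEquiv_zero, pairEquiv_one] using
    stmt8_general B hsym hpos (pairEquiv r) P hP v
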